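/- The good terms and abstractions form the initial freshness-substitution model: for every FS model (T, A, VAR, OP, ABS, FRESH, FRESHABS, substitution) there exist functions f : term → T and fAbs : abs → A such that for all good terms X, Y, good abstractions A, and good inputs inp, binp of domain cardinality < |var|: f (Var xs x) = VAR xs x; f (Op δ inp binp) = OP δ (↑f inp) (↑fAbs binp); fAbs (Abs xs x X) = ABS xs x (f X); f (X[Y/y]_ys) = (f X)[(f Y)/y]_ys; fAbs (A[Y/y]_ys) = (fAbs A)[(f Y)/y]_ys; fresh xs x X implies FRESH xs x (f X); and freshAbs xs x A implies FRESHABS xs x (fAbs A). Moreover f and fAbs are unique on good items: any g : term → T and gAbs : abs → A satisfying the same commutation and preservation properties agree with f on every good term and with fAbs on every good abstraction. -/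

import Mathlib

open scoped Classical

universe u

section Binding

variable (var varsort index bindex opsym : Type u)

/-! ### Inputs -/

/-- An `(α,β)`-input: a partial function from `α` to `β`. -/
abbrev Input (α β : Type u) : Type u := α → Option β

/-- The domain of an input. -/
def idom {α β : Type u} (inp : Input α β) : Set α := {a | inp a ≠ none}

/-- The componentwise lifting of a predicate to inputs. -/
def liftP {α β : Type u} (P : β → Prop) (inp : Input α β) : Prop :=
  ∀ a b, inp a = some b → P b

/-- The componentwise lifting of a function to inputs. -/
def liftF {α β γ : Type u} (f : β → γ) (inp : Input α β) : Input α γ :=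
  fun a => (inp a).map f

/-- An input is small if its domain has cardinality smaller than that of `var`. -/
def smallDom {α β : Type u} (inp : Input α β) : Prop :=
  Cardinal.mk (idom inp) < Cardinal.mk var

/-! ### Quasiterms -/

mutual
/-- Quasiterms: raw terms before quotienting by alpha-equivalence. -/
inductive QTerm : Type u where
  | qVar : varsort → var → QTerm
  | qOp : opsym → (index → Option QTerm) → (bindex → Option QAbs) → QTerm
/-- Quasiabstractions. -/
inductive QAbs : Type u where
  | qAbs : varsort → var → QTerm → QAbs
end

/-- Transposition of two variables. -/
noncomputable def swapVar (z1 z2 x : var) : var :=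
  if x = z1 then z2 else if x = z2 then z1 else x

/-- Sort-aware transposition of variables (acts only on variables of varsort `zs`). -/
noncomputable def swapVarS (zs xs : varsort) (z1 z2 x : var) : var :=
  if xs = zs then swapVar var z1 z2 x else x

variable {var varsort index bindex opsym}

/-- Swapping of the variables `z1`, `z2` at varsort `zs` in a quasiterm
(transposing them everywhere, including binding positions). -/
noncomputable def qSwap (z1 z2 : var) (zs : varsort) :
    QTerm var varsort index bindex opsym → QTerm var varsort index bindex opsym :=
  QTerm.rec (motive_1 := fun _ => QTerm var varsort index bindex opsym)
    (motive_2 := fun _ => QAbs var varsort index bindex opsym)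
    (motive_3 := fun _ => Option (QTerm var varsort index bindex opsym))
    (motive_4 := fun _ => Option (QAbs var varsort index bindex opsym))
    (fun xs x => .qVar xs (swapVarS var varsort zs xs z1 z2 x))
    (fun d _ _ rinp rbinp => .qOp d rinp rbinp)
    (fun xs x _ rX => .qAbs xs (swapVarS var varsort zs xs z1 z2 x) rX)
    none (fun _ r => some r) none (fun _ r => some r)

/-- Swapping of variables in a quasiabstraction. -/
noncomputable def qSwapAbs (z1 z2 : var) (zs : varsort) :
    QAbs var varsort index bindex opsym → QAbs var varsort index bindex opsym
  | .qAbs xs x X => .qAbs xs (swapVarS var varsort zs xs z1 z2 x) (qSwap z1 z2 zs X)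

/-! ### Freshness and goodness -/

mutual
/-- `QFresh ys y X`: the variable `y` of varsort `ys` has no free occurrence in `X`. -/
inductive QFresh : varsort → var → QTerm var varsort index bindex opsym → Prop where
  | qVar : ∀ {ys y xs x}, (ys, y) ≠ (xs, x) → QFresh ys y (.qVar xs x)
  | qOp : ∀ {ys y d inp binp}, (∀ i X, inp i = some X → QFresh ys y X) →
      (∀ j A, binp j = some A → QFreshAbs ys y A) → QFresh ys y (.qOp d inp binp)
/-- Freshness for quasiabstractions. -/
inductive QFreshAbs : varsort → var → QAbs var varsort index bindex opsym → Prop where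
  | qAbs_bound : ∀ {xs x X}, QFreshAbs xs x (.qAbs xs x X)
  | qAbs_body : ∀ {ys y xs x X}, QFresh ys y X → QFreshAbs ys y (.qAbs xs x X)
end

mutual
/-- Good quasiterms: all constructors branch less than `|var|`. -/
inductive QGood : QTerm var varsort index bindex opsym → Prop where
  | qVar : ∀ {xs x}, QGood (.qVar xs x)
  | qOp : ∀ {d inp binp}, (∀ i X, inp i = some X → QGood X) →
      (∀ j A, binp j = some A → QGoodAbs A) →
      smallDom var inp → smallDom var binp → QGood (.qOp d inp binp)
/-- Good quasiabstractions. -/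
inductive QGoodAbs : QAbs var varsort index bindex opsym → Prop where
  | qAbs : ∀ {xs x X}, QGood X → QGoodAbs (.qAbs xs x X)
end

/-! ### Alpha-equivalence -/

mutual
/-- Alpha-equivalence of quasiterms. -/
inductive Alpha : QTerm var varsort index bindex opsym →
    QTerm var varsort index bindex opsym → Prop where
  | qVar : ∀ {xs x}, Alpha (.qVar xs x) (.qVar xs x)
  | qOp : ∀ {d inp binp inp' binp'},
      (∀ i, inp i = none ↔ inp' i = none) →
      (∀ i X X', inp i = some X → inp' i = some X' → Alpha X X') →
      (∀ j, binp j = none ↔ binp' j = none) →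
      (∀ j A A', binp j = some A → binp' j = some A' → AlphaAbs A A') →
      Alpha (.qOp d inp binp) (.qOp d inp' binp')
/-- Alpha-equivalence of quasiabstractions (the exists-fresh formulation). -/
inductive AlphaAbs : QAbs var varsort index bindex opsym →
    QAbs var varsort index bindex opsym → Prop where
  | qAbs : ∀ {xs x x' X X' y}, y ∉ ({x, x'} : Set var) →
      QFresh xs y X → QFresh xs y X' →
      Alpha (qSwap y x xs X) (qSwap y x' xs X') →
      AlphaAbs (.qAbs xs x X) (.qAbs xs x' X')
end

/-! ### Terms and abstractions as quotients -/

variable (var varsort index bindex opsym)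

/-- Terms: quasiterms modulo alpha-equivalence. -/
def Term : Type u := Quot (@Alpha var varsort index bindex opsym)

/-- Abstractions: quasiabstractions modulo alpha-equivalence. -/
def Abstr : Type u := Quot (@AlphaAbs var varsort index bindex opsym)

variable {var varsort index bindex opsym}

/-- The projection from quasiterms to terms. -/
def tmk : QTerm var varsort index bindex opsym → Term var varsort index bindex opsym :=
  Quot.mk _

/-- The projection from quasiabstractions to abstractions. -/
def amk : QAbs var varsort index bindex opsym → Abstr var varsort index bindex opsym :=
  Quot.mk _

/-- A representative of a term. -/
noncomputable def trep (X : Term var varsort index bindex opsym) :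
    QTerm var varsort index bindex opsym := Quot.out X

/-- A representative of an abstraction. -/
noncomputable def arep (A : Abstr var varsort index bindex opsym) :
    QAbs var varsort index bindex opsym := Quot.out A

/-- Good terms. -/
def good (X : Term var varsort index bindex opsym) : Prop := QGood (trep X)

/-- Good abstractions. -/
def goodAbs (A : Abstr var varsort index bindex opsym) : Prop := QGoodAbs (arep A)

/-- The variable-injection constructor on terms. -/
def Var (xs : varsort) (x : var) : Term var varsort index bindex opsym :=
  tmk (.qVar xs x)

/-- The operation constructor on terms. -/
noncomputable def Op (d : opsym) (inp : Input index (Term var varsort index bindex opsym))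
    (binp : Input bindex (Abstr var varsort index bindex opsym)) :
    Term var varsort index bindex opsym :=
  tmk (.qOp d (liftF trep inp) (liftF arep binp))

/-- The abstraction constructor. -/
noncomputable def Abs (xs : varsort) (x : var) (X : Term var varsort index bindex opsym) :
    Abstr var varsort index bindex opsym :=
  amk (.qAbs xs x (trep X))

/-- Freshness on terms. -/
def fresh (ys : varsort) (y : var) (X : Term var varsort index bindex opsym) : Prop :=
  QFresh ys y (trep X)

/-- Freshness on abstractions. -/
def freshAbs (ys : varsort) (y : var) (A : Abstr var varsort index bindex opsym) : Prop :=
  QFreshAbs ys y (arep A)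

/-- Swapping on terms. -/
noncomputable def tswap (X : Term var varsort index bindex opsym)
    (z1 z2 : var) (zs : varsort) : Term var varsort index bindex opsym :=
  tmk (qSwap z1 z2 zs (trep X))

/-! ### Substitution -/

mutual
/-- The graph of capture-avoiding substitution on quasiterms:
`QSubst X Y y ys Z` means that `Z` is a result of substituting `Y` for the free
occurrences of the variable `y` of varsort `ys` in `X` (along a capture-free
representative). -/
inductive QSubst : QTerm var varsort index bindex opsym →
    QTerm var varsort index bindex opsym → var → varsort →
    QTerm var varsort index bindex opsym → Prop where
  | var_eq : ∀ {Y y ys}, QSubst (.qVar ys y) Y y ys Y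
  | var_ne : ∀ {Y y ys xs x}, (xs, x) ≠ (ys, y) → QSubst (.qVar xs x) Y y ys (.qVar xs x)
  | op : ∀ {Y y ys d inp binp inp' binp'},
      (∀ i, inp i = none ↔ inp' i = none) →
      (∀ i X X', inp i = some X → inp' i = some X' → QSubst X Y y ys X') →
      (∀ j, binp j = none ↔ binp' j = none) →
      (∀ j A A', binp j = some A → binp' j = some A' → QSubstAbs A Y y ys A') →
      QSubst (.qOp d inp binp) Y y ys (.qOp d inp' binp')
/-- The graph of capture-avoiding substitution on quasiabstractions. -/
inductive QSubstAbs : QAbs var varsort index bindex opsym →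
    QTerm var varsort index bindex opsym → var → varsort →
    QAbs var varsort index bindex opsym → Prop where
  | abs : ∀ {Y y ys xs x X X'}, (xs, x) ≠ (ys, y) → QFresh xs x Y →
      QSubst X Y y ys X' → QSubstAbs (.qAbs xs x X) Y y ys (.qAbs xs x X')
end

/-- The graph of capture-avoiding substitution on terms. -/
def SubstRel (X Y : Term var varsort index bindex opsym) (y : var) (ys : varsort)
    (Z : Term var varsort index bindex opsym) : Prop :=
  ∃ qX qZ, tmk qX = X ∧ tmk qZ = Z ∧ QSubst qX (trep Y) y ys qZ

/-- Capture-avoiding substitution on terms: `subst X Y y ys` is `X[Y/y]_ys`. -/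
noncomputable def subst (X Y : Term var varsort index bindex opsym)
    (y : var) (ys : varsort) : Term var varsort index bindex opsym :=
  if h : ∃ Z, SubstRel X Y y ys Z then h.choose else X

/-- The graph of capture-avoiding substitution on abstractions. -/
def SubstAbsRel (A : Abstr var varsort index bindex opsym)
    (Y : Term var varsort index bindex opsym) (y : var) (ys : varsort)
    (B : Abstr var varsort index bindex opsym) : Prop :=
  ∃ qA qB, amk qA = A ∧ amk qB = B ∧ QSubstAbs qA (trep Y) y ys qB

/-- Capture-avoiding substitution on abstractions: `substAbs A Y y ys` is `A[Y/y]_ys`. -/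
noncomputable def substAbs (A : Abstr var varsort index bindex opsym)
    (Y : Term var varsort index bindex opsym) (y : var) (ys : varsort) :
    Abstr var varsort index bindex opsym :=
  if h : ∃ B, SubstAbsRel A Y y ys B then h.choose else A

/-! ### Parallel substitution -/

mutual
/-- The graph of capture-avoiding parallel substitution on quasiterms, along an
assignment `ρ : varsort → var → Option qterm`. -/
inductive QPSubst : QTerm var varsort index bindex opsym →
    (varsort → var → Option (QTerm var varsort index bindex opsym)) →
    QTerm var varsort index bindex opsym → Prop where
  | var_some : ∀ {ρ xs x Y}, ρ xs x = some Y → QPSubst (.qVar xs x) ρ Y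
  | var_none : ∀ {ρ xs x}, ρ xs x = none → QPSubst (.qVar xs x) ρ (.qVar xs x)
  | op : ∀ {ρ d inp binp inp' binp'},
      (∀ i, inp i = none ↔ inp' i = none) →
      (∀ i X X', inp i = some X → inp' i = some X' → QPSubst X ρ X') →
      (∀ j, binp j = none ↔ binp' j = none) →
      (∀ j A A', binp j = some A → binp' j = some A' → QPSubstAbs A ρ A') →
      QPSubst (.qOp d inp binp) ρ (.qOp d inp' binp')
/-- The graph of capture-avoiding parallel substitution on quasiabstractions. -/
inductive QPSubstAbs : QAbs var varsort index bindex opsym →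
    (varsort → var → Option (QTerm var varsort index bindex opsym)) →
    QAbs var varsort index bindex opsym → Prop where
  | abs : ∀ {ρ xs x X X'}, ρ xs x = none →
      (∀ ys y Y, ρ ys y = some Y → QFresh xs x Y) →
      QPSubst X ρ X' → QPSubstAbs (.qAbs xs x X) ρ (.qAbs xs x X')
end

/-- Turning a term-valued assignment into a quasiterm-valued one, by picking
representatives. -/
noncomputable def qassign (ρ : varsort → var → Option (Term var varsort index bindex opsym)) :
    varsort → var → Option (QTerm var varsort index bindex opsym) :=
  fun xs x => (ρ xs x).map trep

/-- The graph of parallel substitution on terms. -/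
def PSubstRel (X : Term var varsort index bindex opsym)
    (ρ : varsort → var → Option (Term var varsort index bindex opsym))
    (Z : Term var varsort index bindex opsym) : Prop :=
  ∃ qX qZ, tmk qX = X ∧ tmk qZ = Z ∧ QPSubst qX (qassign ρ) qZ

/-- Capture-avoiding parallel substitution on terms: `psubst X ρ` is `X[ρ]`. -/
noncomputable def psubst (X : Term var varsort index bindex opsym)
    (ρ : varsort → var → Option (Term var varsort index bindex opsym)) :
    Term var varsort index bindex opsym :=
  if h : ∃ Z, PSubstRel X ρ Z then h.choose else X

/-- The graph of parallel substitution on abstractions. -/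
def PSubstAbsRel (A : Abstr var varsort index bindex opsym)
    (ρ : varsort → var → Option (Term var varsort index bindex opsym))
    (B : Abstr var varsort index bindex opsym) : Prop :=
  ∃ qA qB, amk qA = A ∧ amk qB = B ∧ QPSubstAbs qA (qassign ρ) qB

/-- Capture-avoiding parallel substitution on abstractions. -/
noncomputable def psubstAbs (A : Abstr var varsort index bindex opsym)
    (ρ : varsort → var → Option (Term var varsort index bindex opsym)) :
    Abstr var varsort index bindex opsym :=
  if h : ∃ B, PSubstAbsRel A ρ B then h.choose else A

/-- A freshness-substitution (FS) model. -/
structure FSModel (var varsort index bindex opsym : Type u) : Type (u + 1) where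
  T : Type u
  A : Type u
  VAR : varsort → var → T
  OP : opsym → Input index T → Input bindex A → T
  ABS : varsort → var → T → A
  FRESH : varsort → var → T → Prop
  FRESHABS : varsort → var → A → Prop
  SUBST : T → T → var → varsort → T
  SUBSTABS : A → T → var → varsort → A
  -- (i) the freshness implication rules
  fresh_var : ∀ ys y xs x, (ys, y) ≠ (xs, x) → FRESH ys y (VAR xs x)
  fresh_op : ∀ ys y d inp binp, (∀ i t, inp i = some t → FRESH ys y t) →
    (∀ j a, binp j = some a → FRESHABS ys y a) → FRESH ys y (OP d inp binp)
  fresh_abs : ∀ ys y xs x t, ((ys, y) = (xs, x) ∨ FRESH ys y t) →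
    FRESHABS ys y (ABS xs x t)
  -- (ii) the substitution simplification rules
  subst_var_eq : ∀ ys y Y, SUBST (VAR ys y) Y y ys = Y
  subst_var_ne : ∀ xs x Y y ys, (xs, x) ≠ (ys, y) → SUBST (VAR xs x) Y y ys = VAR xs x
  subst_op : ∀ d inp binp Y y ys,
    SUBST (OP d inp binp) Y y ys =
      OP d (liftF (fun t => SUBST t Y y ys) inp) (liftF (fun a => SUBSTABS a Y y ys) binp)
  subst_abs : ∀ xs x t Y y ys, (xs, x) ≠ (ys, y) → FRESH xs x Y →
    SUBSTABS (ABS xs x t) Y y ys = ABS xs x (SUBST t Y y ys)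
  -- (iii) the substitution-based abstraction-equality rules
  abs_cong : ∀ xs x x' y t t', y ∉ ({x, x'} : Set var) → FRESH xs y t →
    FRESH xs y t' → SUBST t (VAR xs y) x xs = SUBST t' (VAR xs y) x' xs →
    ABS xs x t = ABS xs x' t'
  abs_rename : ∀ xs x y t, FRESH xs y t → ABS xs x t = ABS xs y (SUBST t (VAR xs y) x xs)

/-- The commutation and preservation properties of a morphism from the term model
to an FS model (required to hold on good items). -/
def IsFSMorphism (M : FSModel var varsort index bindex opsym)
    (f : Term var varsort index bindex opsym → M.T) (fAbs : Abstr var varsort index bindex opsym → M.A) : Prop :=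
  (∀ xs x, f (Var xs x) = M.VAR xs x) ∧
  (∀ d inp binp, liftP good inp → liftP goodAbs binp →
    smallDom var inp → smallDom var binp →
    f (Op d inp binp) = M.OP d (liftF f inp) (liftF fAbs binp)) ∧
  (∀ xs x X, good X → fAbs (Abs xs x X) = M.ABS xs x (f X)) ∧
  (∀ X Y y ys, good X → good Y → f (subst X Y y ys) = M.SUBST (f X) (f Y) y ys) ∧
  (∀ A Y y ys, goodAbs A → good Y →
    fAbs (substAbs A Y y ys) = M.SUBSTABS (fAbs A) (f Y) y ys) ∧
  (∀ xs x X, good X → fresh xs x X → M.FRESH xs x (f X)) ∧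
  (∀ xs x A, goodAbs A → freshAbs xs x A → M.FRESHABS xs x (fAbs A))

section Aux

theorem qind {P : QTerm var varsort index bindex opsym → Prop}
    {Q : QAbs var varsort index bindex opsym → Prop}
    (hv : ∀ xs x, P (.qVar xs x))
    (ho : ∀ d inp binp, (∀ i X, inp i = some X → P X) → (∀ j A, binp j = some A → Q A) →
      P (.qOp d inp binp))
    (ha : ∀ xs x X, P X → Q (.qAbs xs x X)) : (∀ X, P X) ∧ (∀ A, Q A) := by
  have h1 : ∀ X, P X := by
    intro X
    refine QTerm.rec (motive_1 := P) (motive_2 := Q) (motive_3 := fun o => ∀ X, o = some X → P X)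
      (motive_4 := fun o => ∀ X, o = some X → Q X) hv ?_ ha ?_ ?_ ?_ ?_ X
    · intro d inp binp h1 h2
      exact ho d inp binp h1 h2
    · intro X h; cases h
    · intro X h Y hY; cases hY; exact h
    · intro X h; cases h
    · intro X h Y hY; cases hY; exact h
  refine ⟨h1, ?_⟩
  rintro ⟨xs, x, X⟩
  exact ha _ _ _ (h1 X)

/-- Action of (families of) permutations on quasiterms. -/
noncomputable def qperm (p : varsort → Equiv.Perm var) :
    QTerm var varsort index bindex opsym → QTerm var varsort index bindex opsym :=
  QTerm.rec (motive_1 := fun _ => QTerm var varsort index bindex opsym)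
    (motive_2 := fun _ => QAbs var varsort index bindex opsym)
    (motive_3 := fun _ => Option (QTerm var varsort index bindex opsym))
    (motive_4 := fun _ => Option (QAbs var varsort index bindex opsym))
    (fun xs x => .qVar xs (p xs x))
    (fun d _ _ rinp rbinp => .qOp d rinp rbinp)
    (fun xs x _ rX => .qAbs xs (p xs x) rX)
    none (fun _ r => some r) none (fun _ r => some r)

/-- Action of permutations on quasiabstractions. -/
noncomputable def qpermAbs (p : varsort → Equiv.Perm var) :
    QAbs var varsort index bindex opsym → QAbs var varsort index bindex opsym
  | .qAbs xs x X => .qAbs xs (p xs x) (qperm p X)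

theorem qperm_var (p : varsort → Equiv.Perm var) (xs x) :
    qperm p (.qVar xs x : QTerm var varsort index bindex opsym) = .qVar xs (p xs x) := rfl

theorem qperm_op (p : varsort → Equiv.Perm var) (d inp binp) :
    qperm p (.qOp d inp binp : QTerm var varsort index bindex opsym)
      = .qOp d (liftF (qperm p) inp) (liftF (qpermAbs p) binp) := by
  unfold qperm
  simp only [QTerm.qOp.injEq, true_and]
  constructor
  · funext i
    simp only [liftF]
    cases inp i <;> rfl
  · funext i
    simp only [liftF]
    rcases binp i with _ | ⟨xs, x, X⟩ <;> rfl

theorem qpermAbs_abs (p : varsort → Equiv.Perm var) (xs x X) :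
    qpermAbs p (.qAbs xs x X : QAbs var varsort index bindex opsym)
      = .qAbs xs (p xs x) (qperm p X) := rfl

theorem qSwap_op (z1 z2 : var) (zs : varsort) (d inp binp) :
    qSwap z1 z2 zs (.qOp d inp binp : QTerm var varsort index bindex opsym)
      = .qOp d (liftF (qSwap z1 z2 zs) inp) (liftF (qSwapAbs z1 z2 zs) binp) := by
  unfold qSwap
  simp only [QTerm.qOp.injEq, true_and]
  constructor
  · funext i
    simp only [liftF]
    cases inp i <;> rfl
  · funext i
    simp only [liftF]
    rcases binp i with _ | ⟨xs, x, X⟩ <;> rfl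

theorem liftF_congr {α β γ : Type u} {f g : β → γ} {inp : Input α β}
    (h : ∀ i b, inp i = some b → f b = g b) : liftF f inp = liftF g inp := by
  funext i
  simp only [liftF]
  cases e : inp i with
  | none => rfl
  | some b => simp [h i b e]

theorem liftF_liftF {α β γ δ : Type u} (f : β → γ) (g : γ → δ) (inp : Input α β) :
    liftF g (liftF f inp) = liftF (fun b => g (f b)) inp := by
  funext i
  simp only [liftF]
  cases inp i <;> rfl

theorem liftF_some {α β γ : Type u} {f : β → γ} {inp : Input α β} {i c} :
    liftF f inp i = some c ↔ ∃ b, inp i = some b ∧ f b = c := by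
  simp [liftF]

theorem liftF_forall {α β γ : Type u} {f : β → γ} {inp : Input α β} {P : γ → Prop} :
    (∀ i c, liftF f inp i = some c → P c) ↔ ∀ i b, inp i = some b → P (f b) := by
  simp only [liftF_some]
  constructor
  · intro h i b e
    exact h i _ ⟨b, e, rfl⟩
  · rintro h i c ⟨b, e, rfl⟩
    exact h i b e

theorem liftF_none {α β γ : Type u} {f : β → γ} {inp : Input α β} {i} :
    liftF f inp i = none ↔ inp i = none := by
  simp [liftF]

theorem idom_liftF {α β γ : Type u} (f : β → γ) (inp : Input α β) :
    idom (liftF f inp) = idom inp := by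
  ext i; simp [idom, liftF]

theorem smallDom_liftF {α β γ : Type u} (f : β → γ) (inp : Input α β) :
    smallDom var (liftF f inp) ↔ smallDom var inp := by
  unfold smallDom; rw [idom_liftF]

/-- The family of permutations swapping `a` and `b` at sort `zs`. -/
noncomputable def sw (zs : varsort) (a b : var) : varsort → Equiv.Perm var :=
  fun s => if s = zs then Equiv.swap a b else 1

theorem swapVarS_eq (zs xs : varsort) (a b x : var) :
    swapVarS var varsort zs xs a b x = sw zs a b xs x := by
  unfold swapVarS sw swapVar
  split_ifs <;> simp_all [Equiv.swap_apply_def]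

theorem qSwap_eq_aux (a b : var) (zs : varsort) :
    (∀ X : QTerm var varsort index bindex opsym, qSwap a b zs X = qperm (sw zs a b) X) ∧
    (∀ A : QAbs var varsort index bindex opsym, qSwapAbs a b zs A = qpermAbs (sw zs a b) A) := by
  apply qind
  · intro xs x
    rw [qperm_var, ← swapVarS_eq]; rfl
  · intro d inp binp h1 h2
    rw [qperm_op, qSwap_op, liftF_congr h1, liftF_congr h2]
  · intro xs x X h
    rw [qpermAbs_abs, ← swapVarS_eq, ← h]; rfl

theorem qSwap_eq (a b : var) (zs : varsort) (X : QTerm var varsort index bindex opsym) :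
    qSwap a b zs X = qperm (sw zs a b) X := (qSwap_eq_aux a b zs).1 X

theorem qperm_mul_aux (p q : varsort → Equiv.Perm var) :
    (∀ X : QTerm var varsort index bindex opsym, qperm p (qperm q X) = qperm (p * q) X) ∧
    (∀ A : QAbs var varsort index bindex opsym, qpermAbs p (qpermAbs q A) = qpermAbs (p * q) A) := by
  apply qind
  · intro xs x; rfl
  · intro d inp binp h1 h2
    rw [qperm_op, qperm_op, qperm_op, liftF_liftF, liftF_liftF, liftF_congr h1, liftF_congr h2]
  · intro xs x X h
    rw [qpermAbs_abs, qpermAbs_abs, h]; rfl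

theorem qperm_mul (p q : varsort → Equiv.Perm var) (X : QTerm var varsort index bindex opsym) :
    qperm p (qperm q X) = qperm (p * q) X := (qperm_mul_aux p q).1 X

theorem qperm_one_aux :
    (∀ X : QTerm var varsort index bindex opsym, qperm 1 X = X) ∧
    (∀ A : QAbs var varsort index bindex opsym, qpermAbs 1 A = A) := by
  have hid : ∀ {α β : Type u} (inp : Input α β), liftF (fun b => b) inp = inp := by
    intro α β inp; funext i; simp [liftF]
  apply qind
  · intro xs x; rfl
  · intro d inp binp h1 h2
    rw [qperm_op, liftF_congr (g := fun b => b) h1, liftF_congr (g := fun b => b) h2, hid, hid]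
  · intro xs x X h
    rw [qpermAbs_abs, h]; rfl

theorem qperm_one (X : QTerm var varsort index bindex opsym) : qperm 1 X = X := qperm_one_aux.1 X

/-! Inversion lemmas. -/

theorem qFresh_var {ys : varsort} {y : var} {xs x} :
    QFresh ys y (.qVar xs x : QTerm var varsort index bindex opsym) ↔ (ys, y) ≠ (xs, x) :=
  ⟨fun h => by cases h; assumption, .qVar⟩

theorem qFresh_op {ys : varsort} {y : var} {d inp binp} :
    QFresh ys y (.qOp d inp binp : QTerm var varsort index bindex opsym) ↔
      (∀ i X, inp i = some X → QFresh ys y X) ∧ (∀ j A, binp j = some A → QFreshAbs ys y A) :=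
  ⟨fun h => by cases h; constructor <;> assumption, fun h => .qOp h.1 h.2⟩

theorem qFresh_abs {ys : varsort} {y : var} {xs x X} :
    QFreshAbs ys y (.qAbs xs x X : QAbs var varsort index bindex opsym) ↔
      (ys, y) = (xs, x) ∨ QFresh ys y X := by
  constructor
  · intro h
    cases h
    · exact .inl rfl
    · right; assumption
  · rintro (h | h)
    · cases h; exact .qAbs_bound
    · exact .qAbs_body h

theorem qGood_op {d inp binp} :
    QGood (.qOp d inp binp : QTerm var varsort index bindex opsym) ↔
      (∀ i X, inp i = some X → QGood X) ∧ (∀ j A, binp j = some A → QGoodAbs A) ∧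
      smallDom var inp ∧ smallDom var binp :=
  ⟨fun h => by cases h; refine ⟨?_, ?_, ?_, ?_⟩ <;> assumption,
    fun h => .qOp h.1 h.2.1 h.2.2.1 h.2.2.2⟩

theorem qGood_abs {xs x X} :
    QGoodAbs (.qAbs xs x X : QAbs var varsort index bindex opsym) ↔ QGood X :=
  ⟨fun h => by cases h; assumption, fun h => .qAbs h⟩

theorem qGood_perm_aux (p : varsort → Equiv.Perm var) :
    (∀ X : QTerm var varsort index bindex opsym, QGood (qperm p X) ↔ QGood X) ∧
    (∀ A : QAbs var varsort index bindex opsym, QGoodAbs (qpermAbs p A) ↔ QGoodAbs A) := by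
  apply qind
  · intro xs x; exact ⟨fun _ => .qVar, fun _ => .qVar⟩
  · intro d inp binp h1 h2
    rw [qperm_op, qGood_op, qGood_op, smallDom_liftF, smallDom_liftF]
    simp only [liftF_forall]
    grind
  · intro xs x X h
    rw [qpermAbs_abs, qGood_abs, qGood_abs, h]

theorem qGood_perm {p : varsort → Equiv.Perm var} {X : QTerm var varsort index bindex opsym} :
    QGood (qperm p X) ↔ QGood X := (qGood_perm_aux p).1 X

theorem qFresh_perm_aux (p : varsort → Equiv.Perm var) (ys : varsort) (y : var) :
    (∀ X : QTerm var varsort index bindex opsym, QFresh ys (p ys y) (qperm p X) ↔ QFresh ys y X) ∧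
    (∀ A : QAbs var varsort index bindex opsym,
      QFreshAbs ys (p ys y) (qpermAbs p A) ↔ QFreshAbs ys y A) := by
  have hp : ∀ xs x, (ys, p ys y) = (xs, p xs x) ↔ (ys, y) = (xs, x) := by
    intro xs x
    simp only [Prod.mk.injEq]
    constructor
    · rintro ⟨rfl, h⟩; exact ⟨rfl, (p ys).injective h⟩
    · rintro ⟨rfl, h⟩; exact ⟨rfl, by rw [h]⟩
  apply qind
  · intro xs x
    rw [qperm_var, qFresh_var, qFresh_var, Ne, hp]
  · intro d inp binp h1 h2
    rw [qperm_op, qFresh_op, qFresh_op]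
    simp only [liftF_forall]
    grind
  · intro xs x X h
    rw [qpermAbs_abs, qFresh_abs, qFresh_abs, h, hp]

theorem qFresh_perm {p : varsort → Equiv.Perm var} {ys : varsort} {y : var}
    {X : QTerm var varsort index bindex opsym} :
    QFresh ys (p ys y) (qperm p X) ↔ QFresh ys y X := (qFresh_perm_aux p ys y).1 X

theorem qFresh_perm' {p : varsort → Equiv.Perm var} {ys : varsort} {y : var}
    {X : QTerm var varsort index bindex opsym} :
    QFresh ys y (qperm p X) ↔ QFresh ys ((p ys).symm y) X := by
  rw [← qFresh_perm (p := p) (X := X), Equiv.apply_symm_apply]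

theorem qperm_congr_aux (p q : varsort → Equiv.Perm var) (h : p = q)
    (X : QTerm var varsort index bindex opsym) : qperm p X = qperm q X := by rw [h]

theorem sw_self (zs : varsort) (a b : var) : sw zs a b zs = Equiv.swap a b := by simp [sw]

theorem sw_ne {zs ys : varsort} (a b : var) (h : ys ≠ zs) : sw zs a b ys = 1 := by simp [sw, h]

theorem sw_left (zs : varsort) (a b : var) : sw zs a b zs a = b := by simp [sw]
theorem sw_right (zs : varsort) (a b : var) : sw zs a b zs b = a := by simp [sw]
theorem sw_other {zs ys : varsort} {a b y : var} (h1 : (ys, y) ≠ (zs, a)) (h2 : (ys, y) ≠ (zs, b)) :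
    sw zs a b ys y = y := by
  by_cases h : ys = zs
  · subst h
    rw [sw_self]
    apply Equiv.swap_apply_of_ne_of_ne <;> simp_all
  · rw [sw_ne _ _ h]; rfl
theorem sw_symm (zs ys : varsort) (a b : var) : (sw zs a b ys).symm = sw zs a b ys := by
  by_cases h : ys = zs
  · subst h; rw [sw_self]; simp
  · rw [sw_ne _ _ h]; rfl

theorem qFresh_sw {zs ys : varsort} {a b y : var}
    {X : QTerm var varsort index bindex opsym} :
    QFresh ys y (qperm (sw zs a b) X) ↔ QFresh ys (sw zs a b ys y) X := by
  rw [qFresh_perm', sw_symm]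

/-! Existence of fresh variables. -/

theorem nonfresh_small (hreg : (Cardinal.mk var).IsRegular) (ys : varsort) :
    (∀ X : QTerm var varsort index bindex opsym, QGood X →
      Cardinal.mk {y | ¬ QFresh ys y X} < Cardinal.mk var) ∧
    (∀ A : QAbs var varsort index bindex opsym, QGoodAbs A →
      Cardinal.mk {y | ¬ QFreshAbs ys y A} < Cardinal.mk var) := by
  have hinf := hreg.aleph0_le
  apply qind
  · intro xs x _
    refine lt_of_le_of_lt (Cardinal.mk_le_mk_of_subset (t := {x}) ?_) ?_
    · intro y hy
      simp only [Set.mem_ofPred_eq, qFresh_var, not_not, Prod.mk.injEq] at hy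
      exact hy.2
    · rw [Cardinal.mk_singleton]
      exact lt_of_lt_of_le Cardinal.one_lt_aleph0 hinf
  · intro d inp binp h1 h2 hg
    rw [qGood_op] at hg
    obtain ⟨g1, g2, s1, s2⟩ := hg
    have hsub : {y | ¬ QFresh ys y (.qOp d inp binp : QTerm var varsort index bindex opsym)} ⊆
        (⋃ i : idom inp, {y | ∃ X, inp i = some X ∧ ¬ QFresh ys y X}) ∪
        (⋃ i : idom binp, {y | ∃ X, binp i = some X ∧ ¬ QFreshAbs ys y X}) := by
      intro y hy
      simp only [Set.mem_ofPred_eq, qFresh_op, not_and_or, not_forall] at hy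
      rcases hy with ⟨i, X, e, h⟩ | ⟨i, X, e, h⟩
      · left
        exact Set.mem_iUnion.2 ⟨⟨i, by simp [idom, e]⟩, X, e, h⟩
      · right
        exact Set.mem_iUnion.2 ⟨⟨i, by simp [idom, e]⟩, X, e, h⟩
    refine lt_of_le_of_lt (Cardinal.mk_le_mk_of_subset hsub) ?_
    refine lt_of_le_of_lt (Cardinal.mk_union_le _ _) (Cardinal.add_lt_of_lt hinf ?_ ?_)
    · rw [Cardinal.card_iUnion_lt_iff_forall_of_isRegular hreg s1]
      rintro ⟨i, hi⟩
      obtain ⟨X, hX⟩ := Option.ne_none_iff_exists'.1 hi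
      refine lt_of_le_of_lt (Cardinal.mk_le_mk_of_subset ?_) (h1 i X hX (g1 i X hX))
      rintro y ⟨X', e, h⟩
      have : X' = X := by simpa [hX] using e.symm
      subst this; exact h
    · rw [Cardinal.card_iUnion_lt_iff_forall_of_isRegular hreg s2]
      rintro ⟨i, hi⟩
      obtain ⟨X, hX⟩ := Option.ne_none_iff_exists'.1 hi
      refine lt_of_le_of_lt (Cardinal.mk_le_mk_of_subset ?_) (h2 i X hX (g2 i X hX))
      rintro y ⟨X', e, h⟩
      have : X' = X := by simpa [hX] using e.symm
      subst this; exact h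
  · intro xs x X h hg
    rw [qGood_abs] at hg
    refine lt_of_le_of_lt (Cardinal.mk_le_mk_of_subset ?_) (h hg)
    intro y hy
    simp only [Set.mem_ofPred_eq, qFresh_abs, not_or] at hy
    exact hy.2

theorem exists_fresh (hreg : (Cardinal.mk var).IsRegular) (ys : varsort) (S : Finset var)
    {X Y Z : QTerm var varsort index bindex opsym} (hX : QGood X) (hY : QGood Y) (hZ : QGood Z) :
    ∃ v, v ∉ S ∧ QFresh ys v X ∧ QFresh ys v Y ∧ QFresh ys v Z := by
  have hinf := hreg.aleph0_le
  by_contra hcon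
  have hsub : (Set.univ : Set var) ⊆ ((S : Set var) ∪ {y | ¬ QFresh ys y X}) ∪
      ({y | ¬ QFresh ys y Y} ∪ {y | ¬ QFresh ys y Z}) := by
    intro v _
    simp only [Set.mem_union, Set.mem_ofPred_eq, Finset.mem_coe]
    by_contra h
    exact hcon ⟨v, by tauto⟩
  have h1 := Cardinal.mk_le_mk_of_subset hsub
  rw [Cardinal.mk_univ] at h1
  refine absurd h1 (not_le.2 ?_)
  have hS : Cardinal.mk (S : Set var) < Cardinal.mk var :=
    lt_of_lt_of_le (Cardinal.lt_aleph0_of_finite _) hinf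
  refine lt_of_le_of_lt (Cardinal.mk_union_le _ _) (Cardinal.add_lt_of_lt hinf ?_ ?_)
  · exact lt_of_le_of_lt (Cardinal.mk_union_le _ _) (Cardinal.add_lt_of_lt hinf hS
      ((nonfresh_small hreg ys).1 X hX))
  · exact lt_of_le_of_lt (Cardinal.mk_union_le _ _) (Cardinal.add_lt_of_lt hinf
      ((nonfresh_small hreg ys).1 Y hY) ((nonfresh_small hreg ys).1 Z hZ))

theorem alpha_ind
    {P : QTerm var varsort index bindex opsym → QTerm var varsort index bindex opsym → Prop}
    {Q : QAbs var varsort index bindex opsym → QAbs var varsort index bindex opsym → Prop}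
    (hv : ∀ xs x, P (.qVar xs x) (.qVar xs x))
    (ho : ∀ d inp binp inp' binp', (∀ i, inp i = none ↔ inp' i = none) →
      (∀ i X X', inp i = some X → inp' i = some X' → P X X') →
      (∀ j, binp j = none ↔ binp' j = none) →
      (∀ j A A', binp j = some A → binp' j = some A' → Q A A') →
      P (.qOp d inp binp) (.qOp d inp' binp'))
    (ha : ∀ xs x x' X X' y, y ≠ x → y ≠ x' → QFresh xs y X → QFresh xs y X' →
      Alpha (qperm (sw xs y x) X) (qperm (sw xs y x') X') →
      P (qperm (sw xs y x) X) (qperm (sw xs y x') X') →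
      Q (.qAbs xs x X) (.qAbs xs x' X')) :
    (∀ X X', Alpha X X' → P X X') ∧ (∀ A A', AlphaAbs A A' → Q A A') := by
  have ha' : ∀ xs x x' X X' y, y ∉ ({x, x'} : Set var) → QFresh xs y X → QFresh xs y X' →
      Alpha (qSwap y x xs X) (qSwap y x' xs X') →
      P (qSwap y x xs X) (qSwap y x' xs X') →
      Q (.qAbs xs x X) (.qAbs xs x' X') := by
    intro xs x x' X X' y h1 h2 h3 h4 h5
    rw [qSwap_eq, qSwap_eq] at h4 h5
    simp only [Set.mem_insert_iff, Set.mem_singleton_iff, not_or] at h1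
    exact ha xs x x' X X' y h1.1 h1.2 h2 h3 h4 h5
  have h1 : ∀ X X', Alpha X X' → P X X' := by
    intro X X' h
    refine Alpha.rec (motive_1 := fun X X' _ => P X X') (motive_2 := fun X X' _ => Q X X')
      ?_ ?_ ?_ h
    · intro xs x; exact hv xs x
    · intro d inp binp inp' binp' h1 _ h3 _ h5 h6
      exact ho _ _ _ _ _ h1 h5 h3 h6
    · intro xs x x' X X' y h1 h2 h3 h4 h5
      exact ha' _ _ _ _ _ _ h1 h2 h3 h4 h5
  refine ⟨h1, ?_⟩
  intro A A' h
  cases h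
  exact ha' _ _ _ _ _ _ ‹_› ‹_› ‹_› ‹_› (h1 _ _ ‹_›)

theorem alphaAbs_mk {xs : varsort} {x x' y : var} {X X' : QTerm var varsort index bindex opsym}
    (h1 : y ≠ x) (h2 : y ≠ x') (h3 : QFresh xs y X) (h4 : QFresh xs y X')
    (h5 : Alpha (qperm (sw xs y x) X) (qperm (sw xs y x') X')) :
    AlphaAbs (.qAbs xs x X) (.qAbs xs x' X') := by
  rw [← qSwap_eq, ← qSwap_eq] at h5
  exact .qAbs (by simp [h1, h2]) h3 h4 h5

theorem alpha_symm_aux :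
    (∀ X X' : QTerm var varsort index bindex opsym, Alpha X X' → Alpha X' X) ∧
    (∀ X X' : QAbs var varsort index bindex opsym, AlphaAbs X X' → AlphaAbs X' X) := by
  apply alpha_ind
  · intro xs x; exact .qVar
  · intro d inp binp inp' binp' h1 h2 h3 h4
    exact .qOp (fun i => (h1 i).symm) (fun i X X' e e' => h2 i X' X e' e)
      (fun i => (h3 i).symm) (fun i X X' e e' => h4 i X' X e' e)
  · intro xs x x' X X' y h1 h2 h3 h4 _ h5
    exact alphaAbs_mk h2 h1 h4 h3 h5

theorem exists_some {α β γ : Type u} {f : Input α β} {g : Input α γ}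
    (h : ∀ i, f i = none ↔ g i = none) {i : α} {b : β} (e : f i = some b) :
    ∃ c, g i = some c := by
  cases e' : g i with
  | none => rw [← h, e] at e'; cases e'
  | some c => exact ⟨c, rfl⟩

theorem exists_some' {α β γ : Type u} {f : Input α β} {g : Input α γ}
    (h : ∀ i, f i = none ↔ g i = none) {i : α} {b : γ} (e : g i = some b) :
    ∃ c, f i = some c := exists_some (fun i => (h i).symm) e

theorem smallDom_congr {α β γ : Type u} {f : Input α β} {g : Input α γ}
    (h : ∀ i, f i = none ↔ g i = none) : smallDom var f ↔ smallDom var g := by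
  have : idom f = idom g := by
    ext i; simp [idom, h]
  unfold smallDom
  rw [this]

theorem alpha_good_aux :
    (∀ X X' : QTerm var varsort index bindex opsym, Alpha X X' → (QGood X ↔ QGood X')) ∧
    (∀ X X' : QAbs var varsort index bindex opsym, AlphaAbs X X' → (QGoodAbs X ↔ QGoodAbs X')) := by
  apply alpha_ind
  · intro xs x; exact Iff.rfl
  · intro d inp binp inp' binp' h1 h2 h3 h4
    rw [qGood_op, qGood_op, smallDom_congr h1, smallDom_congr h3]
    have e1 : (∀ i X, inp i = some X → QGood X) ↔ (∀ i X, inp' i = some X → QGood X) := by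
      constructor
      · intro h i X e
        obtain ⟨X', e'⟩ := exists_some' h1 e
        exact (h2 i _ _ e' e).1 (h _ _ e')
      · intro h i X e
        obtain ⟨X', e'⟩ := exists_some h1 e
        exact (h2 i _ _ e e').2 (h _ _ e')
    have e2 : (∀ i X, binp i = some X → QGoodAbs X) ↔ (∀ i X, binp' i = some X → QGoodAbs X) := by
      constructor
      · intro h i X e
        obtain ⟨X', e'⟩ := exists_some' h3 e
        exact (h4 i _ _ e' e).1 (h _ _ e')
      · intro h i X e
        obtain ⟨X', e'⟩ := exists_some h3 e
        exact (h4 i _ _ e e').2 (h _ _ e')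
    rw [e1, e2]
  · intro xs x x' X X' y h1 h2 h3 h4 _ h5
    rw [qGood_perm, qGood_perm] at h5
    rw [qGood_abs, qGood_abs, h5]

theorem fresh_abs_helper {xs ys : varsort} {x x' y u : var}
    {X X' : QTerm var varsort index bindex opsym}
    (h3 : QFresh xs u X) (h4 : QFresh xs u X')
    (h5 : QFresh ys y (qperm (sw xs u x) X) → QFresh ys y (qperm (sw xs u x') X'))
    (h : (ys, y) = (xs, x) ∨ QFresh ys y X) : (ys, y) = (xs, x') ∨ QFresh ys y X' := by
  by_cases e1 : (ys, y) = (xs, x')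
  · exact .inl e1
  right
  by_cases e2 : (ys, y) = (xs, u)
  · cases e2; exact h4
  rw [qFresh_sw, qFresh_sw, sw_other e2 e1] at h5
  apply h5
  by_cases e3 : (ys, y) = (xs, x)
  · cases e3; rw [sw_right]; exact h3
  · rw [sw_other e2 e3]
    exact h.resolve_left e3

theorem alpha_fresh_aux (ys : varsort) (y : var) :
    (∀ X X' : QTerm var varsort index bindex opsym, Alpha X X' →
      (QFresh ys y X ↔ QFresh ys y X')) ∧
    (∀ X X' : QAbs var varsort index bindex opsym, AlphaAbs X X' →
      (QFreshAbs ys y X ↔ QFreshAbs ys y X')) := by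
  apply alpha_ind
  · intro xs x; exact Iff.rfl
  · intro d inp binp inp' binp' h1 h2 h3 h4
    rw [qFresh_op, qFresh_op]
    have e1 : (∀ i X, inp i = some X → QFresh ys y X) ↔
        (∀ i X, inp' i = some X → QFresh ys y X) := by
      constructor
      · intro h i X e
        obtain ⟨X', e'⟩ := exists_some' h1 e
        exact (h2 i _ _ e' e).1 (h _ _ e')
      · intro h i X e
        obtain ⟨X', e'⟩ := exists_some h1 e
        exact (h2 i _ _ e e').2 (h _ _ e')
    have e2 : (∀ i X, binp i = some X → QFreshAbs ys y X) ↔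
        (∀ i X, binp' i = some X → QFreshAbs ys y X) := by
      constructor
      · intro h i X e
        obtain ⟨X', e'⟩ := exists_some' h3 e
        exact (h4 i _ _ e' e).1 (h _ _ e')
      · intro h i X e
        obtain ⟨X', e'⟩ := exists_some h3 e
        exact (h4 i _ _ e e').2 (h _ _ e')
    rw [e1, e2]
  · intro xs x x' X X' u h1 h2 h3 h4 _ h5
    rw [qFresh_abs, qFresh_abs]
    exact ⟨fresh_abs_helper h3 h4 h5.1, fresh_abs_helper h4 h3 h5.2⟩

/-- Two families of permutations applied to alpha-equivalent items. -/
theorem alpha_perm_aux (hreg : (Cardinal.mk var).IsRegular) :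
    (∀ X X' : QTerm var varsort index bindex opsym, Alpha X X' → QGood X →
      ∀ p q : varsort → Equiv.Perm var, (∀ ys y, ¬ QFresh ys y X → p ys y = q ys y) →
        Alpha (qperm p X) (qperm q X')) ∧
    (∀ X X' : QAbs var varsort index bindex opsym, AlphaAbs X X' → QGoodAbs X →
      ∀ p q : varsort → Equiv.Perm var, (∀ ys y, ¬ QFreshAbs ys y X → p ys y = q ys y) →
        AlphaAbs (qpermAbs p X) (qpermAbs q X')) := by
  apply alpha_ind
  · intro xs x _ p q h
    rw [qperm_var, qperm_var, h xs x (by simp [qFresh_var])]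
    exact .qVar
  · intro d inp binp inp' binp' h1 h2 h3 h4 hg p q h
    rw [qGood_op] at hg
    rw [qperm_op, qperm_op]
    simp only [qFresh_op] at h
    refine .qOp ?_ ?_ ?_ ?_
    · intro i; rw [liftF_none, liftF_none, h1]
    · intro i X X' e e'
      obtain ⟨Y, e0, rfl⟩ := liftF_some.1 e
      replace e := e0
      obtain ⟨Y', e1, rfl⟩ := liftF_some.1 e'
      replace e' := e1
      exact h2 i Y Y' e e' (hg.1 i Y e) p q
        (fun ys y hy => h ys y (fun hc => hy (hc.1 i Y e)))
    · intro i; rw [liftF_none, liftF_none, h3]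
    · intro i X X' e e'
      obtain ⟨Y, e0, rfl⟩ := liftF_some.1 e
      replace e := e0
      obtain ⟨Y', e1, rfl⟩ := liftF_some.1 e'
      replace e' := e1
      exact h4 i Y Y' e e' (hg.2.1 i Y e) p q
        (fun ys y hy => h ys y (fun hc => hy (hc.2 i Y e)))
  · intro xs x x' X X' u h1 h2 h3 h4 hα h5 hg p q h
    rw [qGood_abs] at hg
    have hg' : QGood X' := by
      have := (alpha_good_aux.1 _ _ hα)
      rw [qGood_perm, qGood_perm] at this
      exact this.1 hg
    have hA : AlphaAbs (.qAbs xs x X) (.qAbs xs x' X') := alphaAbs_mk h1 h2 h3 h4 hα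
    rw [qpermAbs_abs, qpermAbs_abs]
    obtain ⟨v, hv, hv1, hv2, -⟩ := exists_fresh hreg xs {p xs x, q xs x'}
      (qGood_perm (p := p).2 hg) (qGood_perm (p := q).2 hg') (qGood_perm (p := q).2 hg')
    simp only [Finset.mem_insert, Finset.mem_singleton, not_or] at hv
    refine alphaAbs_mk hv.1 hv.2 hv1 hv2 ?_
    have key := h5 (qGood_perm.2 hg) (sw xs v (p xs x) * p * (sw xs u x)⁻¹)
      (sw xs v (q xs x') * q * (sw xs u x')⁻¹) ?_
    · rw [qperm_mul, qperm_mul, inv_mul_cancel_right, inv_mul_cancel_right] at key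
      rw [qperm_mul, qperm_mul]
      exact key
    · intro ys b hb
      obtain ⟨a, rfl⟩ := (sw xs u x ys).surjective b
      rw [qFresh_perm] at hb
      have hinv : ∀ (s : varsort) (y z : var), (sw xs y z)⁻¹ s = sw xs y z s := by
        intro s y z; exact sw_symm xs s y z
      simp only [Pi.mul_apply, Equiv.Perm.mul_apply, hinv]
      have hinv2 : ∀ (s : varsort) (y z w : var), sw xs y z s (sw xs y z s w) = w := by
        intro s y z w
        have := (sw xs y z s).symm_apply_apply w
        rwa [sw_symm] at this
      rw [hinv2]
      by_cases e : (ys, a) = (xs, x)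
      · cases e
        simp only [sw_right, sw_left]
      · have ha : ¬ QFreshAbs ys a (.qAbs xs x X : QAbs var varsort index bindex opsym) := by
          rw [qFresh_abs]; tauto
        have ha' := ha
        rw [(alpha_fresh_aux ys a).2 _ _ hA, qFresh_abs, not_or] at ha'
        have hu : (ys, a) ≠ (xs, u) := by
          intro e; cases e; exact hb h3
        have hpq := h ys a ha
        have hpv : (ys, p ys a) ≠ (xs, v) := by
          intro e'
          simp only [Prod.mk.injEq] at e'
          obtain ⟨rfl, e'⟩ := e'
          rw [← e', qFresh_perm] at hv1
          exact hb hv1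
        have hpx : (ys, p ys a) ≠ (xs, p xs x) := by
          intro e'
          simp only [Prod.mk.injEq] at e'
          obtain ⟨rfl, e'⟩ := e'
          exact e (by rw [(p ys).injective e'])
        have hqx : (ys, q ys a) ≠ (xs, q xs x') := by
          intro e'
          simp only [Prod.mk.injEq] at e'
          obtain ⟨rfl, e'⟩ := e'
          exact ha'.1 (by rw [(q ys).injective e'])
        rw [sw_other hu e, sw_other hu ha'.1, sw_other hpv hpx, sw_other (hpq ▸ hpv) hqx, hpq]

theorem alpha_refl_aux (hreg : (Cardinal.mk var).IsRegular) :
    (∀ X : QTerm var varsort index bindex opsym, QGood X →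
      ∀ p q : varsort → Equiv.Perm var, (∀ ys y, ¬ QFresh ys y X → p ys y = q ys y) →
        Alpha (qperm p X) (qperm q X)) ∧
    (∀ X : QAbs var varsort index bindex opsym, QGoodAbs X →
      ∀ p q : varsort → Equiv.Perm var, (∀ ys y, ¬ QFreshAbs ys y X → p ys y = q ys y) →
        AlphaAbs (qpermAbs p X) (qpermAbs q X)) := by
  apply qind
  · intro xs x _ p q h
    rw [qperm_var, qperm_var, h xs x (by simp [qFresh_var])]
    exact .qVar
  · intro d inp binp h2 h4 hg p q h
    rw [qGood_op] at hg
    rw [qperm_op, qperm_op]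
    simp only [qFresh_op] at h
    refine .qOp ?_ ?_ ?_ ?_
    · intro i; rw [liftF_none, liftF_none]
    · intro i X X' e e'
      obtain ⟨Y, e0, rfl⟩ := liftF_some.1 e
      replace e := e0
      obtain ⟨Y', e1, rfl⟩ := liftF_some.1 e'
      replace e' := e1
      obtain rfl : Y = Y' := by simpa [e] using e'
      exact h2 i Y e (hg.1 i Y e) p q
        (fun ys y hy => h ys y (fun hc => hy (hc.1 i Y e)))
    · intro i; rw [liftF_none, liftF_none]
    · intro i X X' e e'
      obtain ⟨Y, e0, rfl⟩ := liftF_some.1 e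
      replace e := e0
      obtain ⟨Y', e1, rfl⟩ := liftF_some.1 e'
      replace e' := e1
      obtain rfl : Y = Y' := by simpa [e] using e'
      exact h4 i Y e (hg.2.1 i Y e) p q
        (fun ys y hy => h ys y (fun hc => hy (hc.2 i Y e)))
  · intro xs x X ih hg p q h
    rw [qGood_abs] at hg
    rw [qpermAbs_abs, qpermAbs_abs]
    obtain ⟨v, hv, hv1, hv2, -⟩ := exists_fresh hreg xs {p xs x, q xs x}
      (qGood_perm (p := p).2 hg) (qGood_perm (p := q).2 hg) (qGood_perm (p := q).2 hg)
    simp only [Finset.mem_insert, Finset.mem_singleton, not_or] at hv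
    refine alphaAbs_mk hv.1 hv.2 hv1 hv2 ?_
    rw [qperm_mul, qperm_mul]
    refine ih hg _ _ ?_
    intro ys a hb
    simp only [Pi.mul_apply, Equiv.Perm.mul_apply]
    by_cases e : (ys, a) = (xs, x)
    · cases e
      simp only [sw_right, sw_left]
    · have ha : ¬ QFreshAbs ys a (.qAbs xs x X : QAbs var varsort index bindex opsym) := by
        rw [qFresh_abs]; tauto
      have hpq := h ys a ha
      have hpv : (ys, p ys a) ≠ (xs, v) := by
        intro e'
        simp only [Prod.mk.injEq] at e'
        obtain ⟨rfl, e'⟩ := e'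
        rw [← e', qFresh_perm] at hv1
        exact hb hv1
      have hpx : ∀ r : varsort → Equiv.Perm var, (ys, r ys a) ≠ (xs, r xs x) := by
        intro r e'
        simp only [Prod.mk.injEq] at e'
        obtain ⟨rfl, e'⟩ := e'
        exact e (by rw [(r ys).injective e'])
      rw [sw_other hpv (hpx p), sw_other (hpq ▸ hpv) (hpx q), hpq]

theorem alpha_refl (hreg : (Cardinal.mk var).IsRegular)
    {X : QTerm var varsort index bindex opsym} (hX : QGood X) : Alpha X X := by
  have := (alpha_refl_aux hreg).1 X hX 1 1 (fun _ _ _ => rfl)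
  rwa [qperm_one] at this

theorem alphaAbs_refl (hreg : (Cardinal.mk var).IsRegular)
    {X : QAbs var varsort index bindex opsym} (hX : QGoodAbs X) : AlphaAbs X X := by
  have := (alpha_refl_aux hreg).2 X hX 1 1 (fun _ _ _ => rfl)
  rwa [qperm_one_aux.2] at this

/-- Inversion for alpha on abstractions, with an arbitrary fresh variable. -/
theorem alphaAbs_inv (hreg : (Cardinal.mk var).IsRegular) {xs : varsort} {x : var}
    {X : QTerm var varsort index bindex opsym} {B} (hX : QGood X)
    (h : AlphaAbs (.qAbs xs x X) B) :
    ∃ x' X', B = .qAbs xs x' X' ∧ QGood X' ∧ ∀ v, v ≠ x → v ≠ x' → QFresh xs v X →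
      QFresh xs v X' → Alpha (qperm (sw xs v x) X) (qperm (sw xs v x') X') := by
  have hg := alpha_good_aux.2 _ _ h
  obtain ⟨x', X', u, rfl, hu, h3, h4, hα⟩ : ∃ x' X' u, B = .qAbs xs x' X' ∧
      u ∉ ({x, x'} : Set var) ∧ QFresh xs u X ∧ QFresh xs u X' ∧
      Alpha (qSwap u x xs X) (qSwap u x' xs X') := by
    cases h
    exact ⟨_, _, _, rfl, ‹_›, ‹_›, ‹_›, ‹_›⟩
  simp only [Set.mem_insert_iff, Set.mem_singleton_iff, not_or] at hu
  have hA : AlphaAbs (.qAbs xs x X) (.qAbs xs x' X') := .qAbs (by simp [hu]) h3 h4 hα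
  rw [qGood_abs, qGood_abs] at hg
  refine ⟨x', X', rfl, hg.1 hX, ?_⟩
  intro v hv hv' hv1 hv2
  rw [qSwap_eq, qSwap_eq] at hα
  have key := (alpha_perm_aux hreg).1 _ _ hα (qGood_perm.2 hX) (sw xs v x * (sw xs u x)⁻¹)
      (sw xs v x' * (sw xs u x')⁻¹) ?_
  · rw [qperm_mul, qperm_mul, inv_mul_cancel_right, inv_mul_cancel_right] at key
    exact key
  · intro ys b hb
    obtain ⟨a, rfl⟩ := (sw xs u x ys).surjective b
    rw [qFresh_perm] at hb
    have hinv : ∀ (s : varsort) (y z : var), (sw xs y z)⁻¹ s = sw xs y z s := by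
      intro s y z; exact sw_symm xs s y z
    simp only [Pi.mul_apply, Equiv.Perm.mul_apply, hinv]
    have hinv2 : ∀ (s : varsort) (y z w : var), sw xs y z s (sw xs y z s w) = w := by
      intro s y z w
      have := (sw xs y z s).symm_apply_apply w
      rwa [sw_symm] at this
    rw [hinv2]
    by_cases e : (ys, a) = (xs, x)
    · cases e
      simp only [sw_right, sw_left]
    · have ha : ¬ QFreshAbs ys a (.qAbs xs x X : QAbs var varsort index bindex opsym) := by
        rw [qFresh_abs]; tauto
      have ha' := ha
      rw [(alpha_fresh_aux ys a).2 _ _ hA, qFresh_abs, not_or] at ha'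
      have hu : (ys, a) ≠ (xs, u) := by
        intro e; cases e; exact hb h3
      have hv : (ys, a) ≠ (xs, v) := by
        intro e; cases e; exact hb hv1
      rw [sw_other hu e, sw_other hu ha'.1, sw_other hv e, sw_other hv ha'.1]

theorem alpha_trans_aux (hreg : (Cardinal.mk var).IsRegular) :
    (∀ X : QTerm var varsort index bindex opsym, QGood X → ∀ p Y Z,
      Alpha (qperm p X) Y → Alpha Y Z → Alpha (qperm p X) Z) ∧
    (∀ X : QAbs var varsort index bindex opsym, QGoodAbs X → ∀ p Y Z,
      AlphaAbs (qpermAbs p X) Y → AlphaAbs Y Z → AlphaAbs (qpermAbs p X) Z) := by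
  apply qind
  · intro xs x _ p Y Z h1 h2
    rw [qperm_var] at *
    cases h1
    exact h2
  · intro d inp binp h2 h4 hg p Y Z h h'
    rw [qGood_op] at hg
    rw [qperm_op] at *
    rcases h with _ | ⟨a1, a2, a3, a4⟩
    rcases h' with _ | ⟨b1, b2, b3, b4⟩
    refine .qOp (fun i => (a1 i).trans (b1 i)) ?_ (fun i => (a3 i).trans (b3 i)) ?_
    · intro i X X' e e'
      obtain ⟨W, eW⟩ := exists_some a1 e
      have := a2 i X W e eW
      obtain ⟨Y, e0, rfl⟩ := liftF_some.1 e
      replace e := e0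
      exact h2 i Y e (hg.1 i Y e) p W X' this (b2 i W X' eW e')
    · intro i X X' e e'
      obtain ⟨W, eW⟩ := exists_some a3 e
      have := a4 i X W e eW
      obtain ⟨Y, e0, rfl⟩ := liftF_some.1 e
      replace e := e0
      exact h4 i Y e (hg.2.1 i Y e) p W X' this (b4 i W X' eW e')
  · intro xs x X ih hg p Y Z h h'
    rw [qGood_abs] at hg
    rw [qpermAbs_abs] at *
    obtain ⟨y, Y, rfl, gY, h⟩ := alphaAbs_inv hreg (qGood_perm.2 hg) h
    obtain ⟨z, Z, rfl, gZ, h'⟩ := alphaAbs_inv hreg gY h'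
    obtain ⟨v, hv, hv1, hv2, hv3⟩ := exists_fresh hreg xs {p xs x, y, z}
      (qGood_perm (p := p).2 hg) gY gZ
    simp only [Finset.mem_insert, Finset.mem_singleton, not_or] at hv
    refine alphaAbs_mk hv.1 hv.2.2 hv1 hv3 ?_
    rw [qperm_mul]
    refine ih hg _ (qperm (sw xs v y) Y) _ ?_ ?_
    · rw [← qperm_mul]; exact h v hv.1 hv.2.1 hv1 hv2
    · exact h' v hv.2.1 hv.2.2 hv2 hv3

theorem alpha_trans (hreg : (Cardinal.mk var).IsRegular)
    {X Y Z : QTerm var varsort index bindex opsym} (hX : QGood X) (h1 : Alpha X Y)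
    (h2 : Alpha Y Z) : Alpha X Z := by
  have := (alpha_trans_aux hreg).1 X hX 1 Y Z
  rw [qperm_one] at this
  exact this h1 h2

theorem alphaAbs_trans (hreg : (Cardinal.mk var).IsRegular)
    {X Y Z : QAbs var varsort index bindex opsym} (hX : QGoodAbs X) (h1 : AlphaAbs X Y)
    (h2 : AlphaAbs Y Z) : AlphaAbs X Z := by
  have := (alpha_trans_aux hreg).2 X hX 1 Y Z
  rw [qperm_one_aux.2] at this
  exact this h1 h2

theorem alphaAbs_congr (hreg : (Cardinal.mk var).IsRegular) (xs : varsort) (x : var)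
    {X Y : QTerm var varsort index bindex opsym} (hX : QGood X) (h1 : Alpha X Y) :
    AlphaAbs (.qAbs xs x X) (.qAbs xs x Y) := by
  have hY := (alpha_good_aux.1 _ _ h1).1 hX
  obtain ⟨v, hv, hv1, hv2, -⟩ := exists_fresh hreg xs {x} hX hY hY
  simp only [Finset.mem_singleton] at hv
  exact alphaAbs_mk hv hv hv1 hv2 ((alpha_perm_aux hreg).1 _ _ h1 hX _ _ (fun _ _ _ => rfl))

theorem alphaAbs_rename (hreg : (Cardinal.mk var).IsRegular) (xs : varsort) (x w : var)
    {X : QTerm var varsort index bindex opsym} (hX : QGood X) (hw : QFresh xs w X) :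
    AlphaAbs (.qAbs xs x X) (.qAbs xs w (qperm (sw xs w x) X)) := by
  obtain ⟨v, hv, hv1, hv2, -⟩ := exists_fresh hreg xs {x, w} hX (qGood_perm (p := sw xs w x).2 hX) hX
  simp only [Finset.mem_insert, Finset.mem_singleton, not_or] at hv
  refine alphaAbs_mk hv.1 hv.2 hv1 hv2 ?_
  rw [qperm_mul]
  refine (alpha_refl_aux hreg).1 X hX _ _ ?_
  intro ys a ha
  simp only [Pi.mul_apply, Equiv.Perm.mul_apply]
  have h1 : (ys, a) ≠ (xs, w) := by
    intro e; cases e; exact ha hw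
  have h2 : (ys, a) ≠ (xs, v) := by
    intro e; cases e; exact ha hv1
  by_cases e : (ys, a) = (xs, x)
  · cases e
    simp only [sw_right, sw_left]
  · rw [sw_other h2 e, sw_other h1 e, sw_other h2 h1]

/-! Representatives. -/

theorem eqvGen_alpha (hreg : (Cardinal.mk var).IsRegular)
    {X Y : QTerm var varsort index bindex opsym} (h : Relation.EqvGen Alpha X Y) :
    (QGood X ↔ QGood Y) ∧ (QGood X → Alpha X Y) := by
  induction h with
  | rel X Y h => exact ⟨alpha_good_aux.1 _ _ h, fun _ => h⟩
  | refl X => exact ⟨Iff.rfl, fun h => alpha_refl hreg h⟩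
  | symm X Y _ ih => exact ⟨ih.1.symm, fun h => alpha_symm_aux.1 _ _ (ih.2 (ih.1.2 h))⟩
  | trans X Y Z _ _ ih1 ih2 =>
    exact ⟨ih1.1.trans ih2.1, fun h => alpha_trans hreg h (ih1.2 h) (ih2.2 (ih1.1.1 h))⟩

theorem eqvGen_alphaAbs (hreg : (Cardinal.mk var).IsRegular)
    {X Y : QAbs var varsort index bindex opsym} (h : Relation.EqvGen AlphaAbs X Y) :
    (QGoodAbs X ↔ QGoodAbs Y) ∧ (QGoodAbs X → AlphaAbs X Y) := by
  induction h with
  | rel X Y h => exact ⟨alpha_good_aux.2 _ _ h, fun _ => h⟩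
  | refl X => exact ⟨Iff.rfl, fun h => alphaAbs_refl hreg h⟩
  | symm X Y _ ih => exact ⟨ih.1.symm, fun h => alpha_symm_aux.2 _ _ (ih.2 (ih.1.2 h))⟩
  | trans X Y Z _ _ ih1 ih2 =>
    exact ⟨ih1.1.trans ih2.1, fun h => alphaAbs_trans hreg h (ih1.2 h) (ih2.2 (ih1.1.1 h))⟩

theorem tmk_eq (hreg : (Cardinal.mk var).IsRegular)
    {X Y : QTerm var varsort index bindex opsym} (h : tmk X = tmk Y) :
    (QGood X ↔ QGood Y) ∧ (QGood X → Alpha X Y) := eqvGen_alpha hreg (Quot.eqvGen_exact h)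

theorem amk_eq (hreg : (Cardinal.mk var).IsRegular)
    {X Y : QAbs var varsort index bindex opsym} (h : amk X = amk Y) :
    (QGoodAbs X ↔ QGoodAbs Y) ∧ (QGoodAbs X → AlphaAbs X Y) :=
  eqvGen_alphaAbs hreg (Quot.eqvGen_exact h)

theorem tmk_trep (X : Term var varsort index bindex opsym) : tmk (trep X) = X := Quot.out_eq X

theorem amk_arep (X : Abstr var varsort index bindex opsym) : amk (arep X) = X := Quot.out_eq X

/-! Existence of substitution. -/

theorem choose_inputs {α β γ δ : Type u} {inp : Input α β} {R : β → γ → δ → Prop}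
    (h : ∀ i b, inp i = some b → ∃ c d, R b c d) :
    ∃ (f : Input α γ) (g : Input α δ), (∀ i, inp i = none ↔ f i = none) ∧
      (∀ i, inp i = none ↔ g i = none) ∧
      ∀ i b c d, inp i = some b → f i = some c → g i = some d → R b c d := by
  have : ∀ i, ∃ (oc : Option γ) (od : Option δ), (inp i = none ↔ oc = none) ∧
      (inp i = none ↔ od = none) ∧ ∀ b c d, inp i = some b → oc = some c → od = some d →
      R b c d := by
    intro i
    cases e : inp i with
    | none => exact ⟨none, none, by simp, by simp, by simp⟩
    | some b =>
      obtain ⟨c, d, hR⟩ := h i b e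
      refine ⟨some c, some d, by simp, by simp, ?_⟩
      intro b' c' d' e1 e2 e3
      cases e1; cases e2; cases e3
      exact hR
  choose f g h1 h2 h3 using this
  exact ⟨f, g, h1, h2, h3⟩

theorem subst_exists (hreg : (Cardinal.mk var).IsRegular)
    {Y : QTerm var varsort index bindex opsym} (hY : QGood Y) (y : var) (ys : varsort) :
    (∀ X : QTerm var varsort index bindex opsym, QGood X → ∀ p,
      ∃ q Z, Alpha (qperm p X) q ∧ QSubst q Y y ys Z) ∧
    (∀ X : QAbs var varsort index bindex opsym, QGoodAbs X → ∀ p,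
      ∃ q Z, AlphaAbs (qpermAbs p X) q ∧ QSubstAbs q Y y ys Z) := by
  apply qind
  · intro xs x _ p
    rw [qperm_var]
    by_cases e : (xs, p xs x) = (ys, y)
    · simp only [Prod.mk.injEq] at e
      obtain ⟨rfl, e⟩ := e
      rw [e]
      exact ⟨_, _, .qVar, .var_eq⟩
    · exact ⟨_, _, .qVar, .var_ne e⟩
  · intro d inp binp h1 h2 hg p
    rw [qGood_op] at hg
    rw [qperm_op]
    obtain ⟨f, g, a1, a2, a3⟩ := choose_inputs (fun i X e => h1 i X e (hg.1 i X e) p)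
    obtain ⟨f', g', b1, b2, b3⟩ := choose_inputs (fun i X e => h2 i X e (hg.2.1 i X e) p)
    refine ⟨.qOp d f f', .qOp d g g', .qOp ?_ ?_ ?_ ?_, .op ?_ ?_ ?_ ?_⟩
    · intro i; rw [liftF_none]; exact a1 i
    · intro i X X' e e'
      obtain ⟨W, e0, rfl⟩ := liftF_some.1 e
      obtain ⟨V, eV⟩ := exists_some a2 e0
      exact (a3 i _ _ _ e0 e' eV).1
    · intro i; rw [liftF_none]; exact b1 i
    · intro i X X' e e'
      obtain ⟨W, e0, rfl⟩ := liftF_some.1 e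
      obtain ⟨V, eV⟩ := exists_some b2 e0
      exact (b3 i _ _ _ e0 e' eV).1
    · intro i; rw [← a1, a2]
    · intro i X X' e e'
      obtain ⟨V, eV⟩ := exists_some' a2 e'
      exact (a3 i _ _ _ eV e e').2
    · intro i; rw [← b1, b2]
    · intro i X X' e e'
      obtain ⟨V, eV⟩ := exists_some' b2 e'
      exact (b3 i _ _ _ eV e e').2
  · intro xs x X ih hg p
    rw [qGood_abs] at hg
    rw [qpermAbs_abs]
    have hgp := qGood_perm (p := p).2 hg
    obtain ⟨w, hw, hw1, hw2, -⟩ := exists_fresh hreg xs {p xs x, y} hgp hY hY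
    simp only [Finset.mem_insert, Finset.mem_singleton, not_or] at hw
    obtain ⟨q, Z, hα, hs⟩ := ih hg (sw xs w (p xs x) * p)
    refine ⟨.qAbs xs w q, .qAbs xs w Z, ?_, .abs ?_ hw2 hs⟩
    · refine alphaAbs_trans hreg (qGood_abs.2 hgp) (alphaAbs_rename hreg xs _ w hgp hw1) ?_
      rw [qperm_mul]
      exact alphaAbs_congr hreg xs w (qGood_perm.2 hg) hα
    · simp [hw.2]

theorem subst_ind {Y : QTerm var varsort index bindex opsym} {y : var} {ys : varsort}
    {P : QTerm var varsort index bindex opsym → QTerm var varsort index bindex opsym → Prop}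
    {Q : QAbs var varsort index bindex opsym → QAbs var varsort index bindex opsym → Prop}
    (hv : P (.qVar ys y) Y)
    (hv' : ∀ xs x, (xs, x) ≠ (ys, y) → P (.qVar xs x) (.qVar xs x))
    (ho : ∀ d inp binp inp' binp', (∀ i, inp i = none ↔ inp' i = none) →
      (∀ i X X', inp i = some X → inp' i = some X' → P X X') →
      (∀ j, binp j = none ↔ binp' j = none) →
      (∀ j A A', binp j = some A → binp' j = some A' → Q A A') →
      P (.qOp d inp binp) (.qOp d inp' binp'))
    (ha : ∀ xs x X X', (xs, x) ≠ (ys, y) → QFresh xs x Y → P X X' →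
      Q (.qAbs xs x X) (.qAbs xs x X')) :
    (∀ X X', QSubst X Y y ys X' → P X X') ∧ (∀ A A', QSubstAbs A Y y ys A' → Q A A') := by
  have h1 : ∀ X X', QSubst X Y y ys X' → P X X' := by
    intro X X' h
    have := QSubst.rec
      (motive_1 := fun X Y' y' ys' X' _ => Y' = Y → y' = y → ys' = ys → P X X')
      (motive_2 := fun X Y' y' ys' X' _ => Y' = Y → y' = y → ys' = ys → Q X X')
      ?_ ?_ ?_ ?_ h
    · exact this rfl rfl rfl
    · rintro Y y ys rfl rfl rfl; exact hv
    · rintro Y y ys xs x hne rfl rfl rfl; exact hv' _ _ hne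
    · rintro Y y ys d inp binp inp' binp' h1 _ h3 _ h5 h6 rfl rfl rfl
      exact ho _ _ _ _ _ h1 (fun i X X' e e' => h5 i X X' e e' rfl rfl rfl) h3
        (fun i X X' e e' => h6 i X X' e e' rfl rfl rfl)
    · rintro Y y ys xs x X X' h1 h2 _ h3 rfl rfl rfl
      exact ha _ _ _ _ h1 h2 (h3 rfl rfl rfl)
  refine ⟨h1, ?_⟩
  intro A A' h
  cases h
  exact ha _ _ _ _ ‹_› ‹_› (h1 _ _ ‹_›)

theorem subst_good {Y : QTerm var varsort index bindex opsym} (hY : QGood Y)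
    (y : var) (ys : varsort) :
    (∀ X X', QSubst X Y y ys X' → QGood X → QGood X') ∧
    (∀ A A', QSubstAbs A Y y ys A' → QGoodAbs A → QGoodAbs A') := by
  apply subst_ind
  · intro _; exact hY
  · intro xs x _ _; exact .qVar
  · intro d inp binp inp' binp' h1 h2 h3 h4
    rw [qGood_op, qGood_op, smallDom_congr h1, smallDom_congr h3]
    rintro ⟨g1, g2, g3, g4⟩
    refine ⟨?_, ?_, g3, g4⟩
    · intro i X e
      obtain ⟨X', e'⟩ := exists_some' h1 e
      exact h2 i _ _ e' e (g1 _ _ e')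
    · intro i X e
      obtain ⟨X', e'⟩ := exists_some' h3 e
      exact h4 i _ _ e' e (g2 _ _ e')
  · intro xs x X X' _ _ h
    rw [qGood_abs, qGood_abs]; exact h

/-! Interpretation of quasiterms in a model. -/

/-- Interpretation of quasiterms. -/
noncomputable def interp (M : FSModel var varsort index bindex opsym) :
    QTerm var varsort index bindex opsym → M.T :=
  QTerm.rec (motive_1 := fun _ => M.T) (motive_2 := fun _ => M.A)
    (motive_3 := fun _ => Option M.T) (motive_4 := fun _ => Option M.A)
    (fun xs x => M.VAR xs x)
    (fun d _ _ rinp rbinp => M.OP d rinp rbinp)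
    (fun xs x _ rX => M.ABS xs x rX)
    none (fun _ r => some r) none (fun _ r => some r)

/-- Interpretation of quasiabstractions. -/
noncomputable def interpAbs (M : FSModel var varsort index bindex opsym) :
    QAbs var varsort index bindex opsym → M.A
  | .qAbs xs x X => M.ABS xs x (interp M X)

variable (M : FSModel var varsort index bindex opsym)

theorem interp_var (xs x) : interp M (.qVar xs x) = M.VAR xs x := rfl

theorem interp_abs (xs x X) : interpAbs M (.qAbs xs x X) = M.ABS xs x (interp M X) := rfl

theorem interp_op (d inp binp) : interp M (.qOp d inp binp)
    = M.OP d (liftF (interp M) inp) (liftF (interpAbs M) binp) := by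
  unfold interp
  dsimp only
  congr 1
  · funext i
    simp only [liftF]
    cases inp i <;> rfl
  · funext i
    simp only [liftF]
    rcases binp i with _ | ⟨xs, x, X⟩ <;> rfl

theorem interp_fresh (ys : varsort) (y : var) :
    (∀ X, QFresh ys y X → M.FRESH ys y (interp M X)) ∧
    (∀ A, QFreshAbs ys y A → M.FRESHABS ys y (interpAbs M A)) := by
  apply qind
  · intro xs x h
    exact M.fresh_var _ _ _ _ (qFresh_var.1 h)
  · intro d inp binp h1 h2 h
    rw [qFresh_op] at h
    rw [interp_op]
    apply M.fresh_op
    · rw [liftF_forall]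
      intro i X e
      exact h1 i X e (h.1 i X e)
    · rw [liftF_forall]
      intro i X e
      exact h2 i X e (h.2 i X e)
  · intro xs x X ih h
    rw [qFresh_abs] at h
    rw [interp_abs]
    apply M.fresh_abs
    exact h.imp id ih

theorem sw_conj (r : varsort → Equiv.Perm var) (zs : varsort) (a b : var) :
    r * sw zs a b = sw zs (r zs a) (r zs b) * r := by
  funext s
  simp only [Pi.mul_apply]
  by_cases e : s = zs
  · subst e
    rw [sw_self, sw_self, Equiv.mul_swap_eq_swap_mul]
  · rw [sw_ne _ _ e, sw_ne _ _ e, one_mul, mul_one]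

theorem interp_swap (hreg : (Cardinal.mk var).IsRegular) :
    (∀ X : QTerm var varsort index bindex opsym, QGood X → ∀ p xs x y, QFresh xs y (qperm p X) →
      interp M (qperm (sw xs y x) (qperm p X)) =
        M.SUBST (interp M (qperm p X)) (M.VAR xs y) x xs) ∧
    (∀ X : QAbs var varsort index bindex opsym, QGoodAbs X → ∀ p xs x y,
      QFreshAbs xs y (qpermAbs p X) →
      interpAbs M (qpermAbs (sw xs y x) (qpermAbs p X)) =
        M.SUBSTABS (interpAbs M (qpermAbs p X)) (M.VAR xs y) x xs) := by
  apply qind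
  · intro zs z _ p xs x y h
    rw [qperm_var] at *
    rw [qFresh_var] at h
    rw [qperm_var, interp_var, interp_var]
    by_cases e : (zs, p zs z) = (xs, x)
    · simp only [Prod.mk.injEq] at e
      obtain ⟨rfl, e⟩ := e
      rw [e, sw_right, M.subst_var_eq]
    · rw [sw_other h.symm e, M.subst_var_ne _ _ _ _ _ e]
  · intro d inp binp h1 h2 hg p xs x y h
    rw [qGood_op] at hg
    rw [qperm_op] at *
    rw [qFresh_op, liftF_forall, liftF_forall] at h
    rw [qperm_op, interp_op, interp_op, M.subst_op]
    simp only [liftF_liftF]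
    congr 1
    · exact liftF_congr (fun i X e => h1 i X e (hg.1 i X e) p xs x y (h.1 i X e))
    · exact liftF_congr (fun i X e => h2 i X e (hg.2.1 i X e) p xs x y (h.2 i X e))
  · intro zs z Z ih hg p xs x y h
    rw [qGood_abs] at hg
    rw [qpermAbs_abs] at *
    rw [qpermAbs_abs, interp_abs, interp_abs]
    rw [qFresh_abs] at h
    have ih' : ∀ (r : varsort → Equiv.Perm var) xs x y, QFresh xs y (qperm r (qperm p Z)) →
        M.SUBST (interp M (qperm r (qperm p Z))) (M.VAR xs y) x xs =
        interp M (qperm (sw xs y x) (qperm r (qperm p Z))) := by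
      intro r xs x y h
      rw [qperm_mul r p] at *
      exact (ih hg _ _ _ _ h).symm
    have ih0 := ih hg p
    clear ih
    have hgp := qGood_perm (p := p).2 hg
    generalize p zs z = z' at *
    generalize qperm p Z = Z' at *
    obtain ⟨w, hw, hw1, hw2, -⟩ := exists_fresh hreg zs {x, y, z'} hgp
      (qGood_perm (p := sw xs y x).2 hgp) hgp
    simp only [Finset.mem_insert, Finset.mem_singleton, not_or] at hw
    have hzx : (zs, w) ≠ (xs, x) := by simp [hw.1]
    have hzy : (zs, w) ≠ (xs, y) := by simp [hw.2.1]
    have hy : QFresh xs y (qperm (sw zs w z') Z') := by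
      rw [qFresh_sw]
      by_cases e : (xs, y) = (zs, z')
      · cases e; rw [sw_right]; exact hw1
      · rw [sw_other hzy.symm e]
        exact h.resolve_left e
    rw [M.abs_rename zs _ w _ ((interp_fresh M zs w).1 _ hw2), ih' _ _ _ _ hw2,
      M.abs_rename zs z' w _ ((interp_fresh M zs w).1 _ hw1), ← ih0 _ _ _ hw1,
      M.subst_abs _ _ _ _ _ _ hzx (M.fresh_var _ _ _ _ hzy), ih' _ _ _ _ hy,
      qperm_mul, qperm_mul, sw_conj (sw xs y x) zs w z', sw_other hzy hzx]

theorem interp_alpha (hreg : (Cardinal.mk var).IsRegular) :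
    (∀ X X', Alpha X X' → QGood X → interp M X = interp M X') ∧
    (∀ A A', AlphaAbs A A' → QGoodAbs A → interpAbs M A = interpAbs M A') := by
  have hl : ∀ {α β γ : Type u} {f : β → γ} {inp inp' : Input α β},
      (∀ i, inp i = none ↔ inp' i = none) →
      (∀ i X X', inp i = some X → inp' i = some X' → f X = f X') →
      liftF f inp = liftF f inp' := by
    intro α β γ f inp inp' h1 h2
    funext i
    simp only [liftF]
    cases e : inp i with
    | none => simp [(h1 i).1 e]
    | some X =>
      obtain ⟨X', e'⟩ := exists_some h1 e
      rw [e']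
      simp [h2 i X X' e e']
  apply alpha_ind
  · intro xs x _; rfl
  · intro d inp binp inp' binp' h1 h2 h3 h4 hg
    rw [qGood_op] at hg
    rw [interp_op, interp_op, hl h1 (fun i X X' e e' => h2 i X X' e e' (hg.1 i X e)),
      hl h3 (fun i X X' e e' => h4 i X X' e e' (hg.2.1 i X e))]
  · intro xs x x' X X' y h1 h2 h3 h4 hα h5 hg
    rw [qGood_abs] at hg
    have hg' : QGood X' := by
      have := (alpha_good_aux.1 _ _ hα)
      rw [qGood_perm, qGood_perm] at this
      exact this.1 hg
    rw [interp_abs, interp_abs]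
    have k1 := (interp_swap M hreg).1 X hg 1 xs x y
    have k2 := (interp_swap M hreg).1 X' hg' 1 xs x' y
    rw [qperm_one] at k1 k2
    refine M.abs_cong xs x x' y _ _ (by simp [h1, h2]) ((interp_fresh M xs y).1 _ h3)
      ((interp_fresh M xs y).1 _ h4) ?_
    rw [← k1 h3, ← k2 h4]
    exact h5 (qGood_perm.2 hg)

theorem interp_subst (Y : QTerm var varsort index bindex opsym) (y : var) (ys : varsort) :
    (∀ X X', QSubst X Y y ys X' → interp M X' = M.SUBST (interp M X) (interp M Y) y ys) ∧
    (∀ A A', QSubstAbs A Y y ys A' →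
      interpAbs M A' = M.SUBSTABS (interpAbs M A) (interp M Y) y ys) := by
  have hl : ∀ {α β γ : Type u} {f : β → γ} {k : γ → γ} {inp inp' : Input α β},
      (∀ i, inp i = none ↔ inp' i = none) →
      (∀ i X X', inp i = some X → inp' i = some X' → f X' = k (f X)) →
      liftF f inp' = liftF k (liftF f inp) := by
    intro α β γ f k inp inp' h1 h2
    funext i
    simp only [liftF]
    cases e : inp i with
    | none => simp [(h1 i).1 e]
    | some X =>
      obtain ⟨X', e'⟩ := exists_some h1 e
      rw [e']
      simp [h2 i X X' e e']
  apply subst_ind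
  · rw [interp_var, M.subst_var_eq]
  · intro xs x h
    rw [interp_var, M.subst_var_ne _ _ _ _ _ h]
  · intro d inp binp inp' binp' h1 h2 h3 h4
    rw [interp_op, interp_op, M.subst_op]
    congr 1
    · exact hl h1 h2
    · exact hl h3 h4
  · intro xs x X X' h1 h2 h3
    rw [interp_abs, interp_abs, M.subst_abs _ _ _ _ _ _ h1 ((interp_fresh M xs x).1 _ h2), h3]

theorem interp_trep (hreg : (Cardinal.mk var).IsRegular)
    {X : QTerm var varsort index bindex opsym} (hX : QGood X) :
    interp M (trep (tmk X)) = interp M X :=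
  ((interp_alpha M hreg).1 _ _ ((tmk_eq hreg (tmk_trep (tmk X)).symm).2 hX) hX).symm

theorem interp_arep (hreg : (Cardinal.mk var).IsRegular)
    {X : QAbs var varsort index bindex opsym} (hX : QGoodAbs X) :
    interpAbs M (arep (amk X)) = interpAbs M X :=
  ((interp_alpha M hreg).2 _ _ ((amk_eq hreg (amk_arep (amk X)).symm).2 hX) hX).symm

theorem good_tmk (hreg : (Cardinal.mk var).IsRegular)
    {X : QTerm var varsort index bindex opsym} : good (tmk X) ↔ QGood X :=
  (tmk_eq hreg (tmk_trep (tmk X))).1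

theorem good_amk (hreg : (Cardinal.mk var).IsRegular)
    {X : QAbs var varsort index bindex opsym} : goodAbs (amk X) ↔ QGoodAbs X :=
  (amk_eq hreg (amk_arep (amk X))).1

theorem interp_morphism (hreg : (Cardinal.mk var).IsRegular) :
    IsFSMorphism M (fun X => interp M (trep X)) (fun A => interpAbs M (arep A)) := by
  refine ⟨?_, ?_, ?_, ?_, ?_, ?_, ?_⟩
  · intro xs x
    exact interp_trep M hreg .qVar
  · intro d inp binp h1 h2 h3 h4
    dsimp only
    unfold Op
    rw [interp_trep M hreg, interp_op, liftF_liftF, liftF_liftF]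
    rw [qGood_op, liftF_forall, liftF_forall, smallDom_liftF, smallDom_liftF]
    exact ⟨h1, h2, h3, h4⟩
  · intro xs x X hX
    exact interp_arep M hreg (qGood_abs.2 hX)
  · intro X Y y ys hX hY
    dsimp only
    have hex : ∃ Z, SubstRel X Y y ys Z := by
      obtain ⟨q, Z, hα, hs⟩ := (subst_exists hreg hY y ys).1 (trep X) hX 1
      rw [qperm_one] at hα
      refine ⟨tmk Z, q, Z, ?_, rfl, hs⟩
      rw [← tmk_trep X]
      exact (Quot.sound hα).symm
    have hsub : SubstRel X Y y ys (subst X Y y ys) := by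
      unfold subst
      rw [dif_pos hex]
      exact hex.choose_spec
    obtain ⟨q, Z, e1, e2, hs⟩ := hsub
    subst e1
    have hq := (good_tmk hreg).1 hX
    rw [← e2, interp_trep M hreg ((subst_good hY y ys).1 _ _ hs hq), interp_trep M hreg hq]
    exact (interp_subst M _ y ys).1 _ _ hs
  · intro X Y y ys hX hY
    dsimp only
    have hex : ∃ Z, SubstAbsRel X Y y ys Z := by
      obtain ⟨q, Z, hα, hs⟩ := (subst_exists hreg hY y ys).2 (arep X) hX 1
      rw [qperm_one_aux.2] at hα
      refine ⟨amk Z, q, Z, ?_, rfl, hs⟩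
      rw [← amk_arep X]
      exact (Quot.sound hα).symm
    have hsub : SubstAbsRel X Y y ys (substAbs X Y y ys) := by
      unfold substAbs
      rw [dif_pos hex]
      exact hex.choose_spec
    obtain ⟨q, Z, e1, e2, hs⟩ := hsub
    subst e1
    have hq := (good_amk hreg).1 hX
    rw [← e2, interp_arep M hreg ((subst_good hY y ys).2 _ _ hs hq), interp_arep M hreg hq]
    exact (interp_subst M _ y ys).2 _ _ hs
  · intro xs x X _ h
    exact (interp_fresh M xs x).1 _ h
  · intro xs x X _ h
    exact (interp_fresh M xs x).2 _ h

theorem tmk_op (hreg : (Cardinal.mk var).IsRegular)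
    {d inp binp} (h : QGood (.qOp d inp binp : QTerm var varsort index bindex opsym)) :
    tmk (.qOp d inp binp) = Op d (liftF tmk inp) (liftF amk binp) := by
  rw [qGood_op] at h
  refine Quot.sound (.qOp ?_ ?_ ?_ ?_)
  · intro i; rw [liftF_none, liftF_none]
  · intro i X X' e e'
    rw [liftF_liftF] at e'
    simp only [liftF, e, Option.map_some, Option.some.injEq] at e'
    rw [← e']
    exact (tmk_eq hreg (tmk_trep (tmk X)).symm).2 (h.1 i X e)
  · intro i; rw [liftF_none, liftF_none]
  · intro i X X' e e'
    rw [liftF_liftF] at e'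
    simp only [liftF, e, Option.map_some, Option.some.injEq] at e'
    rw [← e']
    exact (amk_eq hreg (amk_arep (amk X)).symm).2 (h.2.1 i X e)

theorem amk_abs (hreg : (Cardinal.mk var).IsRegular)
    {xs x X} (h : QGood (X : QTerm var varsort index bindex opsym)) :
    amk (.qAbs xs x X) = Abs xs x (tmk X) :=
  Quot.sound (alphaAbs_congr hreg xs x h ((tmk_eq hreg (tmk_trep (tmk X)).symm).2 h))

theorem morphism_unique (hreg : (Cardinal.mk var).IsRegular)
    {f g : Term var varsort index bindex opsym → M.T}
    {fAbs gAbs : Abstr var varsort index bindex opsym → M.A}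
    (hf : IsFSMorphism M f fAbs) (hg : IsFSMorphism M g gAbs) :
    (∀ X, QGood X → g (tmk X) = f (tmk X)) ∧ (∀ A, QGoodAbs A → gAbs (amk A) = fAbs (amk A)) := by
  obtain ⟨f1, f2, f3, -⟩ := hf
  obtain ⟨g1, g2, g3, -⟩ := hg
  apply qind
  · intro xs x _
    exact (g1 xs x).trans (f1 xs x).symm
  · intro d inp binp h1 h2 h
    rw [tmk_op hreg h]
    rw [qGood_op] at h
    have a1 : liftP good (liftF tmk inp) :=
      liftF_forall.2 (fun i X e => (good_tmk hreg).2 (h.1 i X e))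
    have a2 : liftP goodAbs (liftF amk binp) :=
      liftF_forall.2 (fun i X e => (good_amk hreg).2 (h.2.1 i X e))
    have a3 : smallDom var (liftF tmk inp) := (smallDom_liftF _ _).2 h.2.2.1
    have a4 : smallDom var (liftF amk binp) := (smallDom_liftF _ _).2 h.2.2.2
    rw [f2 _ _ _ a1 a2 a3 a4, g2 _ _ _ a1 a2 a3 a4]
    simp only [liftF_liftF]
    rw [liftF_congr (fun i X e => h1 i X e (h.1 i X e)),
      liftF_congr (fun i X e => h2 i X e (h.2.1 i X e))]
  · intro xs x X ih h
    rw [qGood_abs] at h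
    rw [amk_abs hreg h, f3 _ _ _ ((good_tmk hreg).2 h), g3 _ _ _ ((good_tmk hreg).2 h), ih h]

end Aux

/-- the good terms and abstractions form the initial FS model:
for every FS model there exist functions `f`, `fAbs` commuting with the
constructors and substitution and preserving freshness on good items, and any
two such functions agree on good items. -/
theorem initial_FS_model (hinf : Cardinal.aleph0 ≤ Cardinal.mk var)
    (hreg : (Cardinal.mk var).IsRegular)
    (M : FSModel var varsort index bindex opsym) :
    ∃ (f : Term var varsort index bindex opsym → M.T) (fAbs : Abstr var varsort index bindex opsym → M.A),
      IsFSMorphism M f fAbs ∧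
      ∀ (g : Term var varsort index bindex opsym → M.T) (gAbs : Abstr var varsort index bindex opsym → M.A),
        IsFSMorphism M g gAbs →
        (∀ X, good X → g X = f X) ∧ (∀ A, goodAbs A → gAbs A = fAbs A) := by

  have hf := interp_morphism M hreg
  refine ⟨_, _, hf, ?_⟩
  intro g gAbs hg
  obtain ⟨h1, h2⟩ := morphism_unique M hreg hf hg
  constructor
  · intro X hX
    have := h1 (trep X) hX
    rwa [tmk_trep] at this
  · intro A hA
    have := h2 (arep A) hA
    rwa [amk_arep] at this

end Binding
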